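/- Let Z be the set of the four points P₁ = ([1:0],[1:0]), P₂ = ([1:0],[1:1]), P₃ = ([1:1],[1:0]), P₄ = ([0:1],[1:1]) of X = ℙ¹×ℙ¹ and let I = I(Z) be its radical ideal. Then α*(I^{(m)}) = m + 1 for m = 1, 2, 3, 4, 5. In particular the chain of five consecutive jumps by 1 in the Chudnovsky-type classification theorem cannot be shortened to four. -/

import Mathlib

open MvPolynomial

noncomputable section

/-- The bi-graded polynomial ring `ℂ[x₀,x₁,y₀,y₁]`:
the first `Fin 2` summand indexes the variables `x₀,x₁`,
the second the variables `y₀,y₁`. -/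
abbrev R4 : Type := MvPolynomial (Fin 2 ⊕ Fin 2) ℂ

/-- The weight function giving the bi-grading of `R4`. -/
def biWeight : Fin 2 ⊕ Fin 2 → ℕ × ℕ := Sum.elim (fun _ => (1, 0)) (fun _ => (0, 1))

/-- `F` is a (possibly zero) form of bidegree `(p,q)`, i.e. homogeneous of degree `p`
in `x₀,x₁` and homogeneous of degree `q` in `y₀,y₁`. -/
def IsBiForm (F : R4) (p q : ℕ) : Prop :=
  IsWeightedHomogeneous biWeight F (p, q)

/-- The projective line `ℙ¹` over `ℂ`. -/
abbrev ProjLine := Projectivization ℂ (Fin 2 → ℂ)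

/-- The bi-homogeneous prime ideal of a point `P = ([a:b],[c:d])` of `X = ℙ¹ × ℙ¹`,
generated by `b·x₀ - a·x₁` and `d·y₀ - c·y₁`. -/
def pointIdeal (P : ProjLine × ProjLine) : Ideal R4 :=
  Ideal.span
    { C (P.1.rep 1) * X (Sum.inl 0) - C (P.1.rep 0) * X (Sum.inl 1),
      C (P.2.rep 1) * X (Sum.inr 0) - C (P.2.rep 0) * X (Sum.inr 1) }

/-- The `m`-th symbolic power of the radical ideal of the finite set of points `Z ⊂ X`:
`I^{(m)} = ⋂_{P ∈ Z} I(P)^m`.  For `m = 1` this is the radical ideal `I = I(Z)` itself. -/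
def symbPow (Z : Finset (ProjLine × ProjLine)) (m : ℕ) : Ideal R4 :=
  ⨅ P ∈ Z, pointIdeal P ^ m

/-- `α*(J)`: the least `t ≥ 0` such that `J` contains a nonzero form of bidegree `(t,t)`. -/
def alphaStar (J : Ideal R4) : ℕ :=
  sInf {t : ℕ | ∃ F ∈ J, F ≠ 0 ∧ IsBiForm F t t}

/-- `α⁺(J)`: the least `d ≥ 0` such that `J` contains a nonzero form of bidegree `(p,q)`
with `p + q = d`. -/
def alphaPlus (J : Ideal R4) : ℕ :=
  sInf {d : ℕ | ∃ p q : ℕ, p + q = d ∧ ∃ F ∈ J, F ≠ 0 ∧ IsBiForm F p q}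

/-- The point `([1:0],[1:0])` of `ℙ¹ × ℙ¹`. -/
def P₁ : ProjLine × ProjLine :=
  (Projectivization.mk ℂ ![1, 0] (fun h => one_ne_zero (congrFun h 0)),
   Projectivization.mk ℂ ![1, 0] (fun h => one_ne_zero (congrFun h 0)))

/-- The point `([1:0],[1:1])` of `ℙ¹ × ℙ¹`. -/
def P₂ : ProjLine × ProjLine :=
  (Projectivization.mk ℂ ![1, 0] (fun h => one_ne_zero (congrFun h 0)),
   Projectivization.mk ℂ ![1, 1] (fun h => one_ne_zero (congrFun h 0)))

/-- The point `([1:1],[1:0])` of `ℙ¹ × ℙ¹`. -/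
def P₃ : ProjLine × ProjLine :=
  (Projectivization.mk ℂ ![1, 1] (fun h => one_ne_zero (congrFun h 0)),
   Projectivization.mk ℂ ![1, 0] (fun h => one_ne_zero (congrFun h 0)))

/-- The point `([0:1],[1:1])` of `ℙ¹ × ℙ¹`. -/
def P₄ : ProjLine × ProjLine :=
  (Projectivization.mk ℂ ![0, 1] (fun h => one_ne_zero (congrFun h 1)),
   Projectivization.mk ℂ ![1, 1] (fun h => one_ne_zero (congrFun h 0)))

open Classical in
/-- The set `Z = {P₁, P₂, P₃, P₄}`. -/
def Z14 : Finset (ProjLine × ProjLine) := {P₁, P₂, P₃, P₄}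

/-!
The four points lie on the two rulings `y = Q₀` and `y = Q₁`. Substituting `y = s·Q₁ + t·Q₀` expands
a form of bidegree `(p,q)` into monomials `s^a t^b` with `a + b = q`, whose coefficients are binary
forms of degree `p` in `x`. Along the rulings `s` and `t` vanish, so vanishing to order `m` at
`(x, Q₀)` and `(x, Q₁)` makes the linear form of `x` divide the coefficient of `s^a t^b` to the
orders `m - a` and `m - b`. Linear forms of distinct points are relatively prime, so these orders,
summed over the fibres, are at most `p`; conversely, a product of linear forms realises them.
For the given points, with fibres of type `{Q₀, Q₁}`, `{Q₀}` and `{Q₁}`, the condition is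
`max (m - a) (m - b) + (m - a) + (m - b) ≤ p`. When `p = q = t` it is met by the balanced choice of
`a` and `b` exactly when `6m ≤ 5t`.
-/

section IteratedPolynomials

variable {σ R : Type*} [CommSemiring R]

lemma pow_tsub_dvd_coeff_of_mem_span_pair_pow {a : R} {i : σ} {m : ℕ} {G : MvPolynomial σ R}
    (hG : G ∈ Ideal.span {C a, X i} ^ m) (d : σ →₀ ℕ) : a ^ (m - d i) ∣ coeff d G := by
  classical
  have hG' : G ∈ Ideal.span (Set.range ![C a, X i]) ^ m := by
    simpa [Matrix.range_cons, Set.pair_comm] using hG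
  obtain ⟨H, hH, rfl⟩ := (Ideal.mem_span_pow_iff_exists_isHomogeneous _ _).1 hG'
  rw [eval_eq', coeff_sum]
  refine Finset.dvd_sum fun k hk => ?_
  have hk_sum : k 0 + k 1 = m := by
    rw [← Fin.sum_univ_two, ← Finsupp.degree_eq_sum, Finsupp.degree_eq_weight_one]
    exact hH (mem_support_iff.1 hk)
  have hterm : coeff k H * ∏ j, ![C a, X i] j ^ k j =
      C (a ^ k 0) * (coeff k H * monomial (Finsupp.single i (k 1)) 1) := by
    simp only [Fin.prod_univ_two, Matrix.cons_val_zero, Matrix.cons_val_one, C_pow,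
      ← X_pow_eq_monomial]
    ring
  rw [hterm, coeff_C_mul, coeff_mul_monomial']
  split_ifs with hle
  · have hk_le : k 1 ≤ d i := by simpa using hle i
    exact (pow_dvd_pow a (by omega)).mul_right _
  · simp

end IteratedPolynomials

lemma pow_mul_pow_mem_span_pair_pow {R : Type*} [CommSemiring R] (a b : R) {m i j : ℕ}
    (h : m ≤ i + j) : a ^ i * b ^ j ∈ Ideal.span {a, b} ^ m := by
  refine Ideal.pow_le_pow_right h ?_
  rw [pow_add]
  exact Ideal.mul_mem_mul (Ideal.pow_mem_pow (Ideal.subset_span (by simp)) _)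
    (Ideal.pow_mem_pow (Ideal.subset_span (by simp)) _)

section VanishingForm

variable {K : Type*} [Field K]

/-- The linear form `b·x₀ - a·x₁` cutting out the point `[a:b]` of the projective line. -/
def vanishingForm (x : Projectivization K (Fin 2 → K)) : MvPolynomial (Fin 2) K :=
  C (x.rep 1) * X 0 - C (x.rep 0) * X 1

lemma isHomogeneous_vanishingForm (x : Projectivization K (Fin 2 → K)) :
    (vanishingForm x).IsHomogeneous 1 :=
  (isHomogeneous_C_mul_X _ _).sub (isHomogeneous_C_mul_X _ _)

lemma vanishingForm_ne_zero (x : Projectivization K (Fin 2 → K)) : vanishingForm x ≠ 0 := by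
  intro h
  have h₀ : x.rep 0 = 0 := by simpa [vanishingForm] using congrArg (eval ![0, 1]) h
  have h₁ : x.rep 1 = 0 := by simpa [vanishingForm] using congrArg (eval ![1, 0]) h
  exact x.rep_nonzero (by ext i; fin_cases i <;> assumption)

lemma irreducible_vanishingForm (x : Projectivization K (Fin 2 → K)) :
    Irreducible (vanishingForm x) := by
  refine irreducible_of_totalDegree_eq_one
    ((isHomogeneous_vanishingForm x).totalDegree (vanishingForm_ne_zero x)) fun c hc => ?_
  rw [isUnit_iff_ne_zero]
  rintro rfl
  exact vanishingForm_ne_zero x (MvPolynomial.ext _ _ fun d => by simpa using hc d)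

lemma eval_rep_vanishingForm_eq_zero_iff {x y : Projectivization K (Fin 2 → K)} :
    eval y.rep (vanishingForm x) = 0 ↔ x = y := by
  have hdet : eval y.rep (vanishingForm x) = -(Matrix.of ![x.rep, y.rep]).det := by
    simp [vanishingForm, Matrix.det_fin_two]
  rw [hdet, neg_eq_zero, ← not_iff_not, ← ne_eq x, ← ne_eq (Matrix.det _), ← isUnit_iff_ne_zero,
    ← Matrix.isUnit_iff_isUnit_det, ← Matrix.linearIndependent_rows_iff_isUnit,
    ← Projectivization.linearIndependent_pair_iff_ne]
  rfl

lemma C_eval_rep_vanishingForm_mul_X (x y : Projectivization K (Fin 2 → K)) (j : Fin 2) :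
    C (eval y.rep (vanishingForm x)) * X j =
      C (y.rep j) * vanishingForm x - C (x.rep j) * vanishingForm y := by
  simp only [vanishingForm, map_sub, map_mul, eval_C, eval_X]
  revert j
  rw [Fin.forall_fin_two]
  constructor <;> ring

lemma isRelPrime_vanishingForm {x y : Projectivization K (Fin 2 → K)} (h : x ≠ y) :
    IsRelPrime (vanishingForm x) (vanishingForm y) := by
  rw [(irreducible_vanishingForm x).isRelPrime_iff_not_dvd]
  rintro ⟨g, hg⟩
  refine h (eval_rep_vanishingForm_eq_zero_iff.1 ?_).symm
  rw [hg, map_mul, eval_rep_vanishingForm_eq_zero_iff.2 rfl, zero_mul]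

lemma isHomogeneous_prod_vanishingForm_pow (S : Finset (Projectivization K (Fin 2 → K)))
    (k : Projectivization K (Fin 2 → K) → ℕ) :
    (∏ x ∈ S, vanishingForm x ^ k x).IsHomogeneous (∑ x ∈ S, k x) :=
  IsHomogeneous.prod _ _ _ fun x _ => by simpa using (isHomogeneous_vanishingForm x).pow (k x)

lemma prod_vanishingForm_pow_ne_zero (S : Finset (Projectivization K (Fin 2 → K)))
    (k : Projectivization K (Fin 2 → K) → ℕ) : ∏ x ∈ S, vanishingForm x ^ k x ≠ 0 :=
  Finset.prod_ne_zero_iff.2 fun x _ => pow_ne_zero _ (vanishingForm_ne_zero x)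

lemma sum_le_of_forall_vanishingForm_pow_dvd {S : Finset (Projectivization K (Fin 2 → K))}
    {k : Projectivization K (Fin 2 → K) → ℕ} {A : MvPolynomial (Fin 2) K} {p : ℕ}
    (hA : A.IsHomogeneous p) (hA₀ : A ≠ 0) (hdvd : ∀ x ∈ S, vanishingForm x ^ k x ∣ A) :
    ∑ x ∈ S, k x ≤ p := by
  have hprod : ∏ x ∈ S, vanishingForm x ^ k x ∣ A :=
    Finset.prod_dvd_of_isRelPrime (fun _ _ _ _ h => (isRelPrime_vanishingForm h).pow) hdvd
  calc
    ∑ x ∈ S, k x = (∏ x ∈ S, vanishingForm x ^ k x).totalDegree :=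
      ((isHomogeneous_prod_vanishingForm_pow S k).totalDegree
        (prod_vanishingForm_pow_ne_zero S k)).symm
    _ ≤ A.totalDegree := totalDegree_le_of_dvd_of_isDomain hprod hA₀
    _ = p := hA.totalDegree hA₀

end VanishingForm

lemma isWeightedHomogeneous_rename_of_isHomogeneous {σ τ R M : Type*} [CommSemiring R]
    [AddCommMonoid M] {w : τ → M} {f : σ → τ} {c : M} (hw : ∀ i, w (f i) = c)
    {A : MvPolynomial σ R} {n : ℕ} (hA : A.IsHomogeneous n) :
    IsWeightedHomogeneous w (rename f A) (n • c) := by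
  intro d hd
  obtain ⟨u, rfl, hu⟩ := coeff_rename_ne_zero f A d hd
  rw [← hA hu, Finsupp.weight_apply, Finsupp.sum_mapDomain_index (by simp) (by simp [add_smul])]
  simp [hw, Finsupp.weight_apply, Finsupp.sum, Finset.sum_smul]

section BiForms

variable {F : R4} {p q : ℕ}

lemma isBiForm_rename_inl_mul_rename_inr {A B : MvPolynomial (Fin 2) ℂ}
    (hA : A.IsHomogeneous p) (hB : B.IsHomogeneous q) :
    IsBiForm (rename Sum.inl A * rename Sum.inr B) p q := by
  have hx := isWeightedHomogeneous_rename_of_isHomogeneous (w := biWeight) (f := Sum.inl)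
    (c := (1, 0)) (fun _ => rfl) hA
  have hy := isWeightedHomogeneous_rename_of_isHomogeneous (w := biWeight) (f := Sum.inr)
    (c := (0, 1)) (fun _ => rfl) hB
  simpa [IsBiForm] using hx.mul hy

lemma IsBiForm.mem_span_rename_mul_rename (hF : IsBiForm F p q) :
    F ∈ Submodule.span ℂ {G : R4 | ∃ A B : MvPolynomial (Fin 2) ℂ, A.IsHomogeneous p ∧
      B.IsHomogeneous q ∧ rename Sum.inl A * rename Sum.inr B = G} := by
  induction hF using IsWeightedHomogeneous.induction_on with
  | zero => exact zero_mem _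
  | add _ _ _ _ h₁ h₂ => exact add_mem h₁ h₂
  | monomial d r hd =>
    have hdeg : ∑ i, d (Sum.inl i) = p ∧ ∑ j, d (Sum.inr j) = q := by
      rw [Finsupp.weight_apply, Finsupp.sum_fintype _ _ (by simp)] at hd
      simpa [biWeight, Prod.ext_iff] using hd
    have hX : ∀ e : Fin 2 → ℕ, (∏ i, X i ^ e i : MvPolynomial (Fin 2) ℂ).IsHomogeneous (∑ i, e i) :=
      fun e => IsHomogeneous.prod _ _ _ fun i _ => isHomogeneous_X_pow i (e i)
    refine Submodule.subset_span ⟨C r * ∏ i, X i ^ d (Sum.inl i), ∏ j, X j ^ d (Sum.inr j),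
      hdeg.1 ▸ (hX _).C_mul r, hdeg.2 ▸ hX _, ?_⟩
    rw [monomial_eq, Finsupp.prod_fintype _ _ (by simp), Fintype.prod_sum_type]
    simp [mul_assoc]

end BiForms

lemma pointIdeal_eq_span_rename (P : ProjLine × ProjLine) : pointIdeal P =
    Ideal.span {rename Sum.inl (vanishingForm P.1), rename Sum.inr (vanishingForm P.2)} := by
  simp [pointIdeal, vanishingForm]

lemma mem_symbPow {Z : Finset (ProjLine × ProjLine)} {m : ℕ} {F : R4} :
    F ∈ symbPow Z m ↔ ∀ P ∈ Z, F ∈ pointIdeal P ^ m := by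
  simp [symbPow]

section RulingExpansion

variable (Q : Fin 2 → ProjLine)

/-- The substitution `y = s·Q₁ + t·Q₀`, which expands a form on `ℙ¹ × ℙ¹` into monomials in `s, t`
with coefficients in `ℂ[x₀,x₁]`. The new variables are swapped against the points so that
`X i` is, up to a scalar, the linear form cutting out `Q i`. -/
def rulingExpansion : R4 →ₐ[ℂ] MvPolynomial (Fin 2) (MvPolynomial (Fin 2) ℂ) :=
  aeval (Sum.elim (fun i => C (X i)) fun j =>
    C (C ((Q 1).rep j)) * X 0 + C (C ((Q 0).rep j)) * X 1)

lemma rulingExpansion_rename_inl (A : MvPolynomial (Fin 2) ℂ) :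
    rulingExpansion Q (rename Sum.inl A) = C A := by
  suffices h : (rulingExpansion Q).comp (rename Sum.inl) =
      IsScalarTower.toAlgHom ℂ (MvPolynomial (Fin 2) ℂ) _ from DFunLike.congr_fun h A
  ext i
  simp [rulingExpansion, algebraMap_eq]

lemma rulingExpansion_rename_inr (B : MvPolynomial (Fin 2) ℂ) :
    rulingExpansion Q (rename Sum.inr B) =
      map C (aeval (fun j => C ((Q 1).rep j) * X 0 + C ((Q 0).rep j) * X 1) B) := by
  suffices h : (rulingExpansion Q).comp (rename Sum.inr) =
      (mapAlgHom (Algebra.ofId ℂ _)).comp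
        (aeval fun j => C ((Q 1).rep j) * X 0 + C ((Q 0).rep j) * X 1) from DFunLike.congr_fun h B
  ext j
  simp [rulingExpansion, algebraMap_eq]

lemma rulingExpansion_rename_inr_vanishingForm (y : ProjLine) :
    rulingExpansion Q (rename Sum.inr (vanishingForm y)) =
      C (C (eval (Q 1).rep (vanishingForm y))) * X 0 +
        C (C (eval (Q 0).rep (vanishingForm y))) * X 1 := by
  rw [rulingExpansion_rename_inr]
  simp only [vanishingForm, map_sub, map_mul, map_add, algHom_C, algebraMap_eq, aeval_X, map_C,
    map_X, eval_C, eval_X]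
  ring

lemma rulingExpansion_rename_inr_vanishingForm_self (i : Fin 2) :
    rulingExpansion Q (rename Sum.inr (vanishingForm (Q i))) =
      C (C (eval (Q i.rev).rep (vanishingForm (Q i)))) * X i := by
  fin_cases i <;>
    simp [rulingExpansion_rename_inr_vanishingForm, eval_rep_vanishingForm_eq_zero_iff.2 rfl]

variable {Q}

lemma rulingExpansion_injective (hQ : Q.Injective) : Function.Injective (rulingExpansion Q) := by
  set δ := eval (Q 1).rep (vanishingForm (Q 0))
  have hδ : δ ≠ 0 := by
    rw [ne_eq, eval_rep_vanishingForm_eq_zero_iff]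
    exact hQ.ne zero_ne_one
  let inverse : MvPolynomial (Fin 2) (MvPolynomial (Fin 2) ℂ) →+* R4 :=
    eval₂Hom (rename Sum.inl).toRingHom ![C δ⁻¹ * rename Sum.inr (vanishingForm (Q 0)),
      -C δ⁻¹ * rename Sum.inr (vanishingForm (Q 1))]
  suffices hinv : inverse.comp (rulingExpansion Q).toRingHom = RingHom.id R4 from
    Function.LeftInverse.injective (g := inverse) (DFunLike.congr_fun hinv)
  refine ringHom_ext (fun r => by simp [inverse]) ?_
  rintro (i | j)
  · simp [inverse, rulingExpansion]
  · have hcramer := congrArg (rename (Sum.inr : Fin 2 → Fin 2 ⊕ Fin 2))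
      (C_eval_rep_vanishingForm_mul_X (Q 0) (Q 1) j)
    simp only [map_sub, map_mul, rename_C, rename_X] at hcramer
    calc
      inverse (rulingExpansion Q (X (Sum.inr j))) =
          C δ⁻¹ * (C ((Q 1).rep j) * rename Sum.inr (vanishingForm (Q 0)) -
            C ((Q 0).rep j) * rename Sum.inr (vanishingForm (Q 1))) := by
        simp only [inverse, rulingExpansion, aeval_X, Sum.elim_inr, map_add, map_mul,
          coe_eval₂Hom, eval₂_C, eval₂_X, AlgHom.toRingHom_eq_coe, RingHom.coe_coe, rename_C,
          Matrix.cons_val_zero, Matrix.cons_val_one]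
        ring
      _ = X (Sum.inr j) := by
        rw [← hcramer, ← mul_assoc, ← C_mul, inv_mul_cancel₀ hδ, C_1, one_mul]

lemma map_rulingExpansion_pointIdeal_le (x : ProjLine) (i : Fin 2) :
    (pointIdeal (x, Q i)).map (rulingExpansion Q) ≤ Ideal.span {C (vanishingForm x), X i} := by
  rw [pointIdeal_eq_span_rename, Ideal.map_span, Ideal.span_le, Set.image_pair,
    rulingExpansion_rename_inl, rulingExpansion_rename_inr_vanishingForm_self]
  rintro _ (rfl | rfl)
  · exact Ideal.subset_span (by simp)
  · exact Ideal.mul_mem_left _ _ (Ideal.subset_span (by simp))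

variable {F : R4} {m p q : ℕ}

lemma vanishingForm_pow_dvd_coeff_rulingExpansion {x : ProjLine} {i : Fin 2}
    (hF : F ∈ pointIdeal (x, Q i) ^ m) (e : Fin 2 →₀ ℕ) :
    vanishingForm x ^ (m - e i) ∣ coeff e (rulingExpansion Q F) := by
  have hmap := Ideal.mem_map_of_mem (rulingExpansion Q) hF
  rw [Ideal.map_pow] at hmap
  exact pow_tsub_dvd_coeff_of_mem_span_pair_pow
    (Ideal.pow_right_mono (map_rulingExpansion_pointIdeal_le x i) m hmap) e

lemma IsBiForm.isHomogeneous_coeff_rulingExpansion (hF : IsBiForm F p q) (e : Fin 2 →₀ ℕ) :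
    (coeff e (rulingExpansion Q F)).IsHomogeneous p := by
  have hspan := hF.mem_span_rename_mul_rename
  clear hF
  induction hspan using Submodule.span_induction with
  | mem G hG =>
    obtain ⟨A, B, hA, -, rfl⟩ := hG
    rw [map_mul, rulingExpansion_rename_inl, rulingExpansion_rename_inr, coeff_C_mul, coeff_map,
      mul_comm]
    exact hA.C_mul _
  | zero => simpa using isHomogeneous_zero _ _ p
  | add _ _ _ _ h₁ h₂ => simpa using h₁.add h₂
  | smul c _ _ h => simpa [smul_eq_C_mul] using h.C_mul c

lemma IsBiForm.isHomogeneous_rulingExpansion (hF : IsBiForm F p q) :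
    (rulingExpansion Q F).IsHomogeneous q := by
  have hspan := hF.mem_span_rename_mul_rename
  clear hF
  induction hspan using Submodule.span_induction with
  | mem G hG =>
    obtain ⟨A, B, -, hB, rfl⟩ := hG
    rw [map_mul, rulingExpansion_rename_inl, rulingExpansion_rename_inr]
    refine IsHomogeneous.C_mul (IsHomogeneous.map ?_ _) _
    rw [← one_mul q]
    exact hB.aeval _ fun j => (isHomogeneous_C_mul_X _ _).add (isHomogeneous_C_mul_X _ _)
  | zero => simpa using isHomogeneous_zero _ _ q
  | add _ _ _ _ h₁ h₂ => simpa using h₁.add h₂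
  | smul c _ _ h =>
    rw [map_smul]
    exact (homogeneousSubmodule (Fin 2) _ q).smul_of_tower_mem c h

end RulingExpansion

section TwoRulings

open Classical in
/-- The order to which the fibre over `x` must divide the coefficient of `s ^ e 0 * t ^ e 1` in the
expansion (`rulingExpansion`) of a form vanishing to order `m` on `Z`. -/
def fibreOrder (Z : Finset (ProjLine × ProjLine)) (Q : Fin 2 → ProjLine) (m : ℕ) (e : Fin 2 → ℕ)
    (x : ProjLine) : ℕ :=
  Finset.univ.sup fun i => if (x, Q i) ∈ Z then m - e i else 0

variable {Z : Finset (ProjLine × ProjLine)} {Q : Fin 2 → ProjLine} {m p q : ℕ}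

lemma le_fibreOrder_add {x : ProjLine} {i : Fin 2} (e : Fin 2 → ℕ) (h : (x, Q i) ∈ Z) :
    m ≤ fibreOrder Z Q m e x + e i := by
  classical
  rw [← tsub_le_iff_right]
  simpa [fibreOrder, h] using
    Finset.le_sup (f := fun i => if (x, Q i) ∈ Z then m - e i else 0) (Finset.mem_univ i)

lemma vanishingForm_pow_fibreOrder_dvd_coeff {F : R4} (hF : F ∈ symbPow Z m) (e : Fin 2 →₀ ℕ)
    (x : ProjLine) : vanishingForm x ^ fibreOrder Z Q m e x ∣ coeff e (rulingExpansion Q F) := by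
  classical
  obtain ⟨i, -, hi⟩ := Finset.exists_mem_eq_sup Finset.univ Finset.univ_nonempty
    fun i => if (x, Q i) ∈ Z then m - e i else 0
  rw [fibreOrder, hi]
  split_ifs with hx
  · exact vanishingForm_pow_dvd_coeff_rulingExpansion (mem_symbPow.1 hF _ hx) e
  · simp

open Classical in
lemma exists_sum_fibreOrder_le_of_mem_symbPow (hQ : Q.Injective) {F : R4} (hF : F ∈ symbPow Z m)
    (hF₀ : F ≠ 0) (hbi : IsBiForm F p q) :
    ∃ e : Fin 2 → ℕ, ∑ i, e i = q ∧ ∑ x ∈ Z.image Prod.fst, fibreOrder Z Q m e x ≤ p := by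
  have hexp : rulingExpansion Q F ≠ 0 :=
    (map_ne_zero_iff _ (rulingExpansion_injective hQ)).2 hF₀
  obtain ⟨e, he⟩ := ne_zero_iff.1 hexp
  refine ⟨e, ?_, sum_le_of_forall_vanishingForm_pow_dvd
    (hbi.isHomogeneous_coeff_rulingExpansion e) he
    fun x _ => vanishingForm_pow_fibreOrder_dvd_coeff hF e x⟩
  rw [← Finsupp.degree_eq_sum, Finsupp.degree_eq_weight_one]
  exact hbi.isHomogeneous_rulingExpansion he

open Classical in
lemma exists_mem_symbPow_of_sum_fibreOrder_le (hZ : ∀ P ∈ Z, P.2 ∈ Set.range Q) {e : Fin 2 → ℕ}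
    (he : ∑ x ∈ Z.image Prod.fst, fibreOrder Z Q m e x ≤ p) :
    ∃ F ∈ symbPow Z m, F ≠ 0 ∧ IsBiForm F p (∑ i, e i) := by
  obtain ⟨r, rfl⟩ := Nat.exists_eq_add_of_le he
  set D := ∏ x ∈ Z.image Prod.fst, vanishingForm x ^ fibreOrder Z Q m e x
  set E := ∏ i, vanishingForm (Q i) ^ e i
  have hE_hom : E.IsHomogeneous (∑ i, e i) :=
    IsHomogeneous.prod _ _ _ fun i _ => by simpa using (isHomogeneous_vanishingForm (Q i)).pow (e i)
  refine ⟨rename Sum.inl (D * X 0 ^ r) * rename Sum.inr E, mem_symbPow.2 ?_, ?_, ?_⟩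
  · rintro ⟨x, y⟩ hP
    obtain ⟨i, rfl⟩ : ∃ i, Q i = y := hZ _ hP
    have hx : vanishingForm x ^ fibreOrder Z Q m e x ∣ D * X 0 ^ r :=
      (Finset.dvd_prod_of_mem _ (Finset.mem_image_of_mem Prod.fst hP)).mul_right _
    have hy : vanishingForm (Q i) ^ e i ∣ E := Finset.dvd_prod_of_mem _ (Finset.mem_univ i)
    refine Ideal.mem_of_dvd _ (mul_dvd_mul (map_dvd (rename Sum.inl) hx)
      (map_dvd (rename Sum.inr) hy)) ?_
    rw [map_pow, map_pow, pointIdeal_eq_span_rename]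
    exact pow_mul_pow_mem_span_pair_pow _ _ (le_fibreOrder_add e hP)
  · refine mul_ne_zero ((map_ne_zero_iff _ (rename_injective _ Sum.inl_injective)).2 ?_)
      ((map_ne_zero_iff _ (rename_injective _ Sum.inr_injective)).2 ?_)
    · exact mul_ne_zero (prod_vanishingForm_pow_ne_zero _ _) (pow_ne_zero _ (X_ne_zero _))
    · exact Finset.prod_ne_zero_iff.2 fun i _ => pow_ne_zero _ (vanishingForm_ne_zero _)
  · exact isBiForm_rename_inl_mul_rename_inr
      ((isHomogeneous_prod_vanishingForm_pow _ _).mul (isHomogeneous_X_pow _ _)) hE_hom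

open Classical in
theorem exists_biForm_mem_symbPow_iff (hQ : Q.Injective) (hZ : ∀ P ∈ Z, P.2 ∈ Set.range Q) :
    (∃ F ∈ symbPow Z m, F ≠ 0 ∧ IsBiForm F p q) ↔
      ∃ e : Fin 2 → ℕ, ∑ i, e i = q ∧ ∑ x ∈ Z.image Prod.fst, fibreOrder Z Q m e x ≤ p := by
  constructor
  · rintro ⟨F, hF, hF₀, hbi⟩
    exact exists_sum_fibreOrder_le_of_mem_symbPow hQ hF hF₀ hbi
  · rintro ⟨e, rfl, he⟩
    exact exists_mem_symbPow_of_sum_fibreOrder_le hZ he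

end TwoRulings

section FourPoints

/-- The point `[1:0]` of the projective line, where `x₁/x₀` is `0`. -/
def ProjLine.zero : ProjLine :=
  Projectivization.mk ℂ ![1, 0] (fun h => one_ne_zero (congrFun h 0))

/-- The point `[1:1]` of the projective line, where `x₁/x₀` is `1`. -/
def ProjLine.one : ProjLine :=
  Projectivization.mk ℂ ![1, 1] (fun h => one_ne_zero (congrFun h 0))

/-- The point `[0:1]` of the projective line, where `x₁/x₀` is infinite. -/
def ProjLine.infty : ProjLine :=
  Projectivization.mk ℂ ![0, 1] (fun h => one_ne_zero (congrFun h 1))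

lemma ProjLine.zero_ne_one : zero ≠ one := by
  simp [zero, one, Projectivization.mk_eq_mk_iff']

lemma ProjLine.zero_ne_infty : zero ≠ infty := by
  simp [zero, infty, Projectivization.mk_eq_mk_iff']

lemma ProjLine.one_ne_infty : one ≠ infty := by
  simp [one, infty, Projectivization.mk_eq_mk_iff']

open Classical in
lemma Z14_eq : Z14 = {(ProjLine.zero, ProjLine.zero), (ProjLine.zero, ProjLine.one),
    (ProjLine.one, ProjLine.zero), (ProjLine.infty, ProjLine.one)} :=
  rfl

open Classical in
lemma sum_fibreOrder_Z14 (m : ℕ) (e : Fin 2 → ℕ) :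
    ∑ x ∈ Z14.image Prod.fst, fibreOrder Z14 ![ProjLine.zero, ProjLine.one] m e x =
      max (m - e 0) (m - e 1) + (m - e 0) + (m - e 1) := by
  have himage : Z14.image Prod.fst = {ProjLine.zero, ProjLine.one, ProjLine.infty} := by
    simp [Z14_eq]
  rw [himage]
  simp [fibreOrder, Z14_eq, Fin.univ_succ, ProjLine.zero_ne_one, ProjLine.zero_ne_infty,
    ProjLine.one_ne_infty, ProjLine.zero_ne_one.symm, ProjLine.zero_ne_infty.symm,
    ProjLine.one_ne_infty.symm, add_assoc]

lemma exists_biForm_mem_symbPow_Z14_iff {m p q : ℕ} :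
    (∃ F ∈ symbPow Z14 m, F ≠ 0 ∧ IsBiForm F p q) ↔
      ∃ a b, a + b = q ∧ max (m - a) (m - b) + (m - a) + (m - b) ≤ p := by
  classical
  have hQ : Function.Injective ![ProjLine.zero, ProjLine.one] := by
    simp [Function.Injective, Fin.forall_fin_two, ProjLine.zero_ne_one, ProjLine.zero_ne_one.symm]
  rw [exists_biForm_mem_symbPow_iff hQ (by simp [Z14_eq])]
  simp [sum_fibreOrder_Z14, Fin.exists_fin_succ_pi]

lemma exists_biForm_diag_mem_symbPow_Z14_iff {m t : ℕ} :
    (∃ F ∈ symbPow Z14 m, F ≠ 0 ∧ IsBiForm F t t) ↔ 6 * m ≤ 5 * t := by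
  rw [exists_biForm_mem_symbPow_Z14_iff]
  constructor
  · rintro ⟨a, b, hab, h⟩
    omega
  · intro h
    exact ⟨t / 2, (t + 1) / 2, by omega, by omega⟩

end FourPoints

theorem alphaStar_four_points_example_general (m : ℕ) :
    alphaStar (symbPow Z14 m) = 6 * m ⌈/⌉ 5 := by
  simp only [alphaStar, exists_biForm_diag_mem_symbPow_Z14_iff, ← smul_eq_mul 5,
    ← ceilDiv_le_iff_le_smul (show 0 < 5 by simp)]
  exact csInf_Ici

/-- For the set `Z` of the four points `([1:0],[1:0])`, `([1:0],[1:1])`, `([1:1],[1:0])`,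
`([0:1],[1:1])` with radical ideal `I`, one has `α*(I^{(m)}) = m + 1` for `m = 1,…,5`:
the chain of five consecutive jumps by `1` cannot be shortened to four. -/
theorem alphaStar_four_points_example :
    ∀ m : ℕ, 1 ≤ m → m ≤ 5 → alphaStar (symbPow Z14 m) = m + 1 := by
  intro m hm₁ hm₅
  rw [alphaStar_four_points_example_general, Nat.ceilDiv_eq_add_pred_div]
  omega
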